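/- Let w_1,…,w_L > 0 and μ > 0, and let Σ_{1:L} be Hermitian positive semidefinite. Define Ω_l = Ω_l(Σ), the dual covariances Σ̂_k = (w_k/μ)(Ω_k^{-1} − (Ω_k + H_{k,k}Σ_kH_{k,k}^†)^{-1}) (which are Hermitian positive semidefinite), and Ω̂_l = I + Σ_{k=1}^{L} Φ_{k,l} H_{k,l}^† Σ̂_k H_{k,l} (Hermitian positive definite). Suppose that for every l, Σ_l possesses the polite water-filling structure with water-filling level w_l/μ: there exist N_l ≥ 0, F_l ∈ ℂ^{n_l×N_l}, G_l ∈ ℂ^{m_l×N_l} with orthonormal columns and diagonal Δ_l ∈ ℝ^{N_l×N_l} with positive diagonal such that Ω_l^{-1/2} H_{l,l} Ω̂_l^{-1/2} = F_l Δ_l G_l^† and Ω̂_l^{1/2} Σ_l Ω̂_l^{1/2} = G_l ((w_l/μ) I − Δ_l^{-2})^+ G_l^†. Then Σ_{1:L} satisfies the KKT stationarity conditions of the weighted sum-rate maximization problem: for every l there exists a Hermitian positive semidefinite Θ_l ∈ ℂ^{m_l×m_l} with Tr(Σ_l Θ_l) = 0 such that μ Ω̂_l = w_l H_{l,l}^†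 (Ω_l + H_{l,l}Σ_lH_{l,l}^†)^{-1} H_{l,l} + Θ_l. -/

import Mathlib

/-!
Factor the forward and dual covariances of a link as `Ω = A Aᴴ` and `Ω̂ = Bᴴ B`. Whitening replaces
the channel by `A⁻¹ H B⁻¹` and the input covariance by `B S Bᴴ`; it respects the stationarity
condition, so `Ω` and `Ω̂` may be taken to be the identity. For a whitened channel with thin SVD
`F Δ Gᴴ` and input `G P Gᴴ`, the gradient `w Hᴴ (1 + H S Hᴴ)⁻¹ H` of the weighted rate equals
`G C Gᴴ` with `C` diagonal, because inverting `1 + F M Fᴴ` on the range of `F` only inverts `1 + M`.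
The multiplier is therefore `Θ = μ - G C Gᴴ`, and everything reduces to the two scalar facts
`C i ≤ μ` and `P i (μ - C i) = 0` that characterize water-filling on parallel channels.
-/

open Matrix ComplexOrder

noncomputable section

/-- Forward interference-plus-noise covariance of link `l` in a B-MAC network. -/
def bmacOmega {L : ℕ} (m n : Fin L → ℕ)
    (H : ∀ l k : Fin L, Matrix (Fin (n l)) (Fin (m k)) ℂ)
    (Φ : Fin L → Fin L → ℝ)
    (S : ∀ k : Fin L, Matrix (Fin (m k)) (Fin (m k)) ℂ) (l : Fin L) :
    Matrix (Fin (n l)) (Fin (n l)) ℂ :=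
  1 + ∑ k : Fin L, Φ l k • (H l k * S k * (H l k)ᴴ)

/-- Forward rate of link `l`. -/
def bmacRate {L : ℕ} (m n : Fin L → ℕ)
    (H : ∀ l k : Fin L, Matrix (Fin (n l)) (Fin (m k)) ℂ)
    (Φ : Fin L → Fin L → ℝ)
    (S : ∀ k : Fin L, Matrix (Fin (m k)) (Fin (m k)) ℂ) (l : Fin L) : ℝ :=
  Real.log ((bmacOmega m n H Φ S l + H l l * S l * (H l l)ᴴ).det.re)
    - Real.log ((bmacOmega m n H Φ S l).det.re)

/-- Achievable rate region under a sum power constraint. -/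
def bmacRegion {L : ℕ} (m n : Fin L → ℕ)
    (H : ∀ l k : Fin L, Matrix (Fin (n l)) (Fin (m k)) ℂ)
    (Φ : Fin L → Fin L → ℝ) (PT : ℝ) : Set (Fin L → ℝ) :=
  {r | (∀ l, 0 ≤ r l) ∧
    ∃ S : ∀ k : Fin L, Matrix (Fin (m k)) (Fin (m k)) ℂ,
      (∀ k, (S k).PosSemidef) ∧
      (∑ l, (Matrix.trace (S l)).re) ≤ PT ∧
      ∀ l, r l ≤ bmacRate m n H Φ S l}

section ParallelChannels

/-- The power that water-filling at level `c` allocates to a parallel channel of gain `d`; it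
is meaningful only for `d ≠ 0`, since `0⁻¹ = 0`. -/
def waterFillingPower (c d : ℝ) : ℝ :=
  max (c - (d ^ 2)⁻¹) 0

/-- The marginal rate of a parallel channel of gain `d` carrying power `p`, i.e. the derivative of
`p ↦ log (1 + d ^ 2 * p)`. -/
def marginalRate (d p : ℝ) : ℝ :=
  d ^ 2 / (1 + d ^ 2 * p)

lemma waterFillingPower_nonneg (c d : ℝ) : 0 ≤ waterFillingPower c d :=
  le_max_right _ _

lemma waterFillingPower_eq_zero {c d : ℝ} (h : c ≤ (d ^ 2)⁻¹) : waterFillingPower c d = 0 :=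
  max_eq_right (sub_nonpos.2 h)

lemma mul_marginalRate_waterFillingPower_of_inv_sq_le {w μ d : ℝ} (hμ : μ ≠ 0) (hd : d ≠ 0)
    (h : (d ^ 2)⁻¹ ≤ w / μ) : w * marginalRate d (waterFillingPower (w / μ) d) = μ := by
  have hw : w ≠ 0 := by
    rintro rfl
    have : 0 < (d ^ 2)⁻¹ := by positivity
    exact this.not_ge (by simpa only [zero_div] using h)
  have hden : 1 + d ^ 2 * (w / μ - (d ^ 2)⁻¹) = d ^ 2 * w / μ := by
    field_simp
    ring
  rw [waterFillingPower, max_eq_left (sub_nonneg.2 h), marginalRate, hden]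
  field_simp

lemma mul_marginalRate_waterFillingPower_le {w μ d : ℝ} (hμ : 0 < μ) (hd : d ≠ 0) :
    w * marginalRate d (waterFillingPower (w / μ) d) ≤ μ := by
  rcases le_total (d ^ 2)⁻¹ (w / μ) with h | h
  · exact (mul_marginalRate_waterFillingPower_of_inv_sq_le hμ.ne' hd h).le
  · rw [waterFillingPower_eq_zero h, marginalRate, mul_zero, add_zero, div_one]
    rwa [inv_eq_one_div, div_le_div_iff₀ hμ (by positivity), one_mul] at h

lemma waterFillingPower_mul_sub_marginalRate {w μ d : ℝ} (hμ : μ ≠ 0) (hd : d ≠ 0) :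
    waterFillingPower (w / μ) d * (μ - w * marginalRate d (waterFillingPower (w / μ) d)) = 0 := by
  rcases le_total (d ^ 2)⁻¹ (w / μ) with h | h
  · rw [mul_marginalRate_waterFillingPower_of_inv_sq_le hμ hd h, sub_self, mul_zero]
  · rw [waterFillingPower_eq_zero h, zero_mul]

end ParallelChannels

section OrthonormalColumns

variable {ι κ ν R : Type*} [Fintype ι] [Fintype κ] [DecidableEq κ] [Fintype ν]
  [DecidableEq ν] [CommRing R]

lemma inv_one_add_mul_mul_mul_self {F : Matrix κ ν R} {F' : Matrix ν κ R} (hF : F' * F = 1)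
    {M : Matrix ν ν R} (hM : IsUnit (1 + M)) : (1 + F * M * F')⁻¹ * F = F * (1 + M)⁻¹ := by
  have hdet : IsUnit (1 + M).det := (isUnit_iff_isUnit_det _).1 hM
  have hdet' : IsUnit (1 + F * M * F').det := by
    rwa [Matrix.mul_assoc, det_one_add_mul_comm, Matrix.mul_assoc, hF, Matrix.mul_one]
  have hcomm : F * (1 + M) = (1 + F * M * F') * F := by
    rw [Matrix.mul_add, Matrix.add_mul, Matrix.mul_assoc _ F', hF]
    simp only [Matrix.one_mul, Matrix.mul_one]
  calc (1 + F * M * F')⁻¹ * F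
      = (1 + F * M * F')⁻¹ * (F * (1 + M)) * (1 + M)⁻¹ := by
        rw [← Matrix.mul_assoc, mul_nonsing_inv_cancel_right _ _ hdet]
    _ = F * (1 + M)⁻¹ := by rw [hcomm, nonsing_inv_mul_cancel_left _ _ hdet']

lemma conjTranspose_mul_inv_one_add_mul_of_orthonormal [StarRing R] {F : Matrix κ ν R}
    {G : Matrix ι ν R} (hF : Fᴴ * F = 1) (hG : Gᴴ * G = 1) {D P : Matrix ν ν R}
    (hDP : IsUnit (1 + D * P * Dᴴ)) :
    (F * D * Gᴴ)ᴴ * (1 + F * D * Gᴴ * (G * P * Gᴴ) * (F * D * Gᴴ)ᴴ)⁻¹ * (F * D * Gᴴ)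
      = G * (Dᴴ * (1 + D * P * Dᴴ)⁻¹ * D) * Gᴴ := by
  have hadj : (F * D * Gᴴ)ᴴ = G * Dᴴ * Fᴴ := by
    simp only [conjTranspose_mul, conjTranspose_conjTranspose, Matrix.mul_assoc]
  have hout : F * D * Gᴴ * (G * P * Gᴴ) * (G * Dᴴ * Fᴴ) = F * (D * P * Dᴴ) * Fᴴ :=
    calc _ = F * D * (Gᴴ * G) * P * (Gᴴ * G) * Dᴴ * Fᴴ := by simp only [Matrix.mul_assoc]
      _ = F * (D * P * Dᴴ) * Fᴴ := by simp only [hG, Matrix.mul_one, Matrix.mul_assoc]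
  rw [hadj, hout]
  calc _ = G * Dᴴ * Fᴴ * ((1 + F * (D * P * Dᴴ) * Fᴴ)⁻¹ * F) * D * Gᴴ := by
        simp only [Matrix.mul_assoc]
    _ = G * Dᴴ * (Fᴴ * F) * (1 + D * P * Dᴴ)⁻¹ * D * Gᴴ := by
        rw [inv_one_add_mul_mul_mul_self hF hDP]
        simp only [Matrix.mul_assoc]
    _ = G * (Dᴴ * (1 + D * P * Dᴴ)⁻¹ * D) * Gᴴ := by
        simp only [hF, Matrix.mul_one, Matrix.mul_assoc]

end OrthonormalColumns

section SingleLink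

lemma posSemidef_smul_one_sub_diagonal {ν 𝕜 : Type*} [DecidableEq ν] [RCLike 𝕜] {a : ℝ} {c : ν → ℝ}
    (hc : ∀ i, c i ≤ a) :
    (a • 1 - diagonal (fun i => (c i : 𝕜))).PosSemidef := by
  have hdiag : a • 1 - diagonal (fun i => (c i : 𝕜)) = diagonal (fun i => ((a - c i : ℝ) : 𝕜)) := by
    rw [← diagonal_one, ← diagonal_smul, diagonal_sub]
    simp [RCLike.real_smul_eq_coe_mul]
  rw [hdiag]
  exact PosSemidef.diagonal fun i => RCLike.ofReal_nonneg.2 (sub_nonneg.2 (hc i))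

variable {ι κ ν 𝕜 : Type*} [Fintype ι] [Fintype κ] [DecidableEq κ] [Fintype ν]
  [DecidableEq ν] [RCLike 𝕜]

lemma posSemidef_smul_one_sub_mul_mul_conjTranspose [DecidableEq ι] {G : Matrix ι ν 𝕜}
    (hG : Gᴴ * G = 1) {a : ℝ} (ha : 0 ≤ a) {M : Matrix ν ν 𝕜} (hM : (a • 1 - M).PosSemidef) :
    (a • 1 - G * M * Gᴴ).PosSemidef := by
  have hproj : (1 - G * Gᴴ)ᴴ * (1 - G * Gᴴ) = 1 - G * Gᴴ := by
    have hidem : G * Gᴴ * (G * Gᴴ) = G * Gᴴ := by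
      rw [Matrix.mul_assoc, ← Matrix.mul_assoc Gᴴ G, hG, Matrix.one_mul]
    simp [Matrix.sub_mul, Matrix.mul_sub, hidem]
  have hcompl : (1 - G * Gᴴ).PosSemidef := hproj ▸ posSemidef_conjTranspose_mul_self _
  have hsplit : a • 1 - G * M * Gᴴ = a • (1 - G * Gᴴ) + G * (a • 1 - M) * Gᴴ := by
    simp only [Matrix.mul_sub, Matrix.sub_mul, smul_sub, Matrix.mul_smul, Matrix.smul_mul,
      Matrix.mul_one]
    abel
  exact hsplit ▸ (hcompl.smul ha).add (hM.mul_mul_conjTranspose_same G)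

lemma one_add_diagonal_mul_diagonal_mul_conjTranspose (δ p : ν → ℝ) :
    1 + diagonal (fun i => (δ i : 𝕜)) * diagonal (fun i => (p i : 𝕜))
        * (diagonal fun i => (δ i : 𝕜))ᴴ
      = diagonal (fun i => ((1 + δ i ^ 2 * p i : ℝ) : 𝕜)) := by
  rw [diagonal_conjTranspose, diagonal_mul_diagonal, diagonal_mul_diagonal, ← diagonal_one,
    diagonal_add]
  congr 1
  funext i
  simp only [Pi.star_apply, RCLike.star_def, RCLike.conj_ofReal]
  push_cast
  ring

lemma inv_diagonal_ofReal {d : ν → ℝ} (hd : ∀ i, d i ≠ 0) :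
    (diagonal fun i => (d i : 𝕜))⁻¹ = diagonal (fun i => (((d i)⁻¹ : ℝ) : 𝕜)) := by
  refine inv_eq_right_inv ?_
  rw [diagonal_mul_diagonal, ← diagonal_one]
  congr 1
  funext i
  rw [← RCLike.ofReal_mul, mul_inv_cancel₀ (hd i), RCLike.ofReal_one]

lemma conjTranspose_mul_inv_one_add_mul_diagonal {F : Matrix κ ν 𝕜} {G : Matrix ι ν 𝕜}
    (hF : Fᴴ * F = 1) (hG : Gᴴ * G = 1) (δ : ν → ℝ) {p : ν → ℝ} (hp : ∀ i, 0 ≤ p i)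
    {H : Matrix κ ι 𝕜} (hH : H = F * diagonal (fun i => (δ i : 𝕜)) * Gᴴ)
    {S : Matrix ι ι 𝕜} (hS : S = G * diagonal (fun i => (p i : 𝕜)) * Gᴴ) :
    Hᴴ * (1 + H * S * Hᴴ)⁻¹ * H
      = G * diagonal (fun i => (marginalRate (δ i) (p i) : 𝕜)) * Gᴴ := by
  have hpos : ∀ i, 1 + δ i ^ 2 * p i ≠ 0 := fun i => by
    have := hp i
    positivity
  have hunit : IsUnit (1 + diagonal (fun i => (δ i : 𝕜)) * diagonal (fun i => (p i : 𝕜))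
      * (diagonal fun i => (δ i : 𝕜))ᴴ) := by
    rw [one_add_diagonal_mul_diagonal_mul_conjTranspose, isUnit_diagonal, Pi.isUnit_iff]
    exact fun i => (RCLike.ofReal_ne_zero.2 (hpos i)).isUnit
  rw [hH, hS, conjTranspose_mul_inv_one_add_mul_of_orthonormal hF hG hunit,
    one_add_diagonal_mul_diagonal_mul_conjTranspose, inv_diagonal_ofReal hpos,
    diagonal_conjTranspose, diagonal_mul_diagonal, diagonal_mul_diagonal]
  congr 3
  funext i
  simp only [Pi.star_apply, RCLike.star_def, RCLike.conj_ofReal, marginalRate]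
  push_cast
  ring

/-- The polite water-filling structure at level `c`, for a channel `H` and an input covariance `S`
that are already whitened: `F`, `δ`, `G` form a thin singular value decomposition of `H`, and `S`
water-fills over its singular values. -/
structure IsPoliteWaterFilling (c : ℝ) (H : Matrix κ ι 𝕜) (S : Matrix ι ι 𝕜)
    (F : Matrix κ ν 𝕜) (G : Matrix ι ν 𝕜) (δ : ν → ℝ) : Prop where
  pos : ∀ i, 0 < δ i
  left_orthonormal : Fᴴ * F = 1
  right_orthonormal : Gᴴ * G = 1
  channel_eq : H = F * diagonal (fun i => (δ i : 𝕜)) * Gᴴ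
  covariance_eq : S = G * diagonal (fun i => (waterFillingPower c (δ i) : 𝕜)) * Gᴴ

/-- The KKT stationarity condition of weighted sum-rate maximization on one link, with forward
covariance `Ω`, dual covariance `Ωh`, weight `w` and power multiplier `μ`. The interference terms of
the gradient are contained in `μ • Ωh`, and `Θ` is the multiplier of `0 ≤ S`. -/
def IsKKTStationary (w μ : ℝ) (H : Matrix κ ι 𝕜) (S : Matrix ι ι 𝕜) (Ω : Matrix κ κ 𝕜)
    (Ωh : Matrix ι ι 𝕜) : Prop :=
  ∃ Θ : Matrix ι ι 𝕜, Θ.PosSemidef ∧ trace (S * Θ) = 0 ∧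
    μ • Ωh = w • (Hᴴ * (Ω + H * S * Hᴴ)⁻¹ * H) + Θ

lemma IsPoliteWaterFilling.isKKTStationary_one [DecidableEq ι] {w μ : ℝ} (hμ : 0 < μ)
    {H : Matrix κ ι 𝕜} {S : Matrix ι ι 𝕜} {F : Matrix κ ν 𝕜} {G : Matrix ι ν 𝕜} {δ : ν → ℝ}
    (h : IsPoliteWaterFilling (w / μ) H S F G δ) : IsKKTStationary w μ H S 1 1 := by
  set p : ν → ℝ := fun i => waterFillingPower (w / μ) (δ i)
  set c : ν → ℝ := fun i => w * marginalRate (δ i) (p i)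
  set C : Matrix ν ν 𝕜 := diagonal fun i => (c i : 𝕜)
  have hgrad : w • (Hᴴ * (1 + H * S * Hᴴ)⁻¹ * H) = G * C * Gᴴ := by
    have hC : C = w • diagonal fun i => (marginalRate (δ i) (p i) : 𝕜) := by
      rw [← diagonal_smul]
      simp [C, c, Pi.smul_def, RCLike.real_smul_eq_coe_mul]
    rw [conjTranspose_mul_inv_one_add_mul_diagonal h.left_orthonormal h.right_orthonormal δ
      (fun i => waterFillingPower_nonneg (w / μ) (δ i)) h.channel_eq h.covariance_eq, hC,
      Matrix.mul_smul, Matrix.smul_mul]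
  have hslack : diagonal (fun i => (p i : 𝕜)) * (μ • 1 - C) = 0 := by
    rw [← diagonal_one, ← diagonal_smul, diagonal_sub, diagonal_mul_diagonal, diagonal_eq_zero]
    funext i
    have := waterFillingPower_mul_sub_marginalRate (w := w) hμ.ne' (h.pos i).ne'
    simpa [p, c, RCLike.real_smul_eq_coe_mul] using congrArg (RCLike.ofReal (K := 𝕜)) this
  refine ⟨μ • 1 - G * C * Gᴴ, ?_, ?_, ?_⟩
  · exact posSemidef_smul_one_sub_mul_mul_conjTranspose h.right_orthonormal hμ.le
      (posSemidef_smul_one_sub_diagonal fun i =>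
        mul_marginalRate_waterFillingPower_le hμ (h.pos i).ne')
  · have hSΘ : S * (μ • 1 - G * C * Gᴴ) = G * (diagonal (fun i => (p i : 𝕜)) * (μ • 1 - C)) * Gᴴ :=
      calc _ = μ • (G * diagonal (fun i => (p i : 𝕜)) * Gᴴ)
              - G * diagonal (fun i => (p i : 𝕜)) * (Gᴴ * G) * C * Gᴴ := by
            rw [h.covariance_eq]
            simp only [Matrix.mul_sub, Matrix.mul_smul, Matrix.mul_one, Matrix.mul_assoc, p]
        _ = _ := by
            simp only [h.right_orthonormal, Matrix.mul_sub, Matrix.sub_mul, Matrix.mul_smul,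
              Matrix.smul_mul, Matrix.mul_one, Matrix.mul_assoc]
    rw [hSΘ, hslack, Matrix.mul_zero, Matrix.zero_mul, trace_zero]
  · rw [hgrad, add_sub_cancel]

lemma IsKKTStationary.of_congruence {ι' : Type*} [Fintype ι'] {w μ : ℝ} {A : Matrix κ κ 𝕜}
    (hA : IsUnit A) {B : Matrix ι' ι 𝕜} {H : Matrix κ ι' 𝕜} {S : Matrix ι ι 𝕜} {Ω : Matrix κ κ 𝕜}
    {Ωh : Matrix ι' ι' 𝕜} (h : IsKKTStationary w μ H (B * S * Bᴴ) Ω Ωh) :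
    IsKKTStationary w μ (A * H * B) S (A * Ω * Aᴴ) (Bᴴ * Ωh * B) := by
  obtain ⟨Θ, hΘ, htrace, hstat⟩ := h
  have hAdet : IsUnit A.det := (isUnit_iff_isUnit_det A).1 hA
  have hAdet' : IsUnit Aᴴ.det := (isUnit_iff_isUnit_det Aᴴ).1 hA.star
  have hadj : (A * H * B)ᴴ = Bᴴ * Hᴴ * Aᴴ := by
    simp only [conjTranspose_mul, Matrix.mul_assoc]
  have hcov : A * Ω * Aᴴ + A * H * B * S * (A * H * B)ᴴ
      = A * (Ω + H * (B * S * Bᴴ) * Hᴴ) * Aᴴ := by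
    rw [hadj]
    simp only [Matrix.mul_add, Matrix.add_mul, Matrix.mul_assoc]
  have hgrad : (A * H * B)ᴴ * (A * Ω * Aᴴ + A * H * B * S * (A * H * B)ᴴ)⁻¹ * (A * H * B)
      = Bᴴ * (Hᴴ * (Ω + H * (B * S * Bᴴ) * Hᴴ)⁻¹ * H) * B := by
    rw [hcov, hadj, Matrix.mul_inv_rev, Matrix.mul_inv_rev]
    simp only [Matrix.mul_assoc, mul_nonsing_inv_cancel_left _ _ hAdet',
      nonsing_inv_mul_cancel_left _ _ hAdet]
  refine ⟨Bᴴ * Θ * B, hΘ.conjTranspose_mul_mul_same B, ?_, ?_⟩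
  · calc trace (S * (Bᴴ * Θ * B)) = trace (S * Bᴴ * Θ * B) := by simp only [Matrix.mul_assoc]
      _ = trace (B * S * Bᴴ * Θ) := by rw [trace_mul_comm]; simp only [Matrix.mul_assoc]
      _ = 0 := htrace
  · calc μ • (Bᴴ * Ωh * B) = Bᴴ * (μ • Ωh) * B := by rw [Matrix.mul_smul, Matrix.smul_mul]
      _ = _ := by
        rw [hstat, hgrad]
        simp only [Matrix.mul_add, Matrix.add_mul, Matrix.mul_smul, Matrix.smul_mul]

theorem stmt18_general [DecidableEq ι] {w μ : ℝ} (hμ : 0 < μ) {A Ω : Matrix κ κ 𝕜}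
    (hA : IsUnit A) (hΩ : A * Aᴴ = Ω) {B Ωh : Matrix ι ι 𝕜} (hB : IsUnit B) (hΩh : Bᴴ * B = Ωh)
    {H : Matrix κ ι 𝕜} {S : Matrix ι ι 𝕜} {F : Matrix κ ν 𝕜} {G : Matrix ι ν 𝕜} {δ : ν → ℝ}
    (h : IsPoliteWaterFilling (w / μ) (A⁻¹ * H * B⁻¹) (B * S * Bᴴ) F G δ) :
    IsKKTStationary w μ H S Ω Ωh := by
  have hH : A * (A⁻¹ * H * B⁻¹) * B = H := by
    rw [Matrix.mul_assoc A⁻¹, mul_nonsing_inv_cancel_left _ _ ((isUnit_iff_isUnit_det A).1 hA),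
      nonsing_inv_mul_cancel_right _ _ ((isUnit_iff_isUnit_det B).1 hB)]
  simpa only [hH, Matrix.mul_one, hΩ, hΩh] using (h.isKKTStationary_one hμ).of_congruence hA

end SingleLink

/-- If every input covariance possesses the polite water-filling structure
with water-filling level `w_l/μ`, then the input satisfies the KKT
stationarity conditions of the weighted sum-rate maximization problem. -/
theorem stmt18 {L : ℕ} (hL : 1 ≤ L) (m n : Fin L → ℕ)
    (H : ∀ l k : Fin L, Matrix (Fin (n l)) (Fin (m k)) ℂ)
    (Φ : Fin L → Fin L → ℝ)
    (hΦ : ∀ l k, Φ l k = 0 ∨ Φ l k = 1) (hΦd : ∀ l, Φ l l = 0)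
    (w : Fin L → ℝ) (hw : ∀ l, 0 < w l) (μ : ℝ) (hμ : 0 < μ)
    (S : ∀ k : Fin L, Matrix (Fin (m k)) (Fin (m k)) ℂ)
    (hS : ∀ k, (S k).PosSemidef)
    (Sh : ∀ k : Fin L, Matrix (Fin (n k)) (Fin (n k)) ℂ)
    (hSh : ∀ k, Sh k = (w k / μ) • ((bmacOmega m n H Φ S k)⁻¹
      - (bmacOmega m n H Φ S k + H k k * S k * (H k k)ᴴ)⁻¹))
    (hShpsd : ∀ k, (Sh k).PosSemidef)
    (Ωh : ∀ l : Fin L, Matrix (Fin (m l)) (Fin (m l)) ℂ)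
    (hΩh : ∀ l, Ωh l = 1 + ∑ k : Fin L, Φ k l • ((H k l)ᴴ * Sh k * H k l))
    (hΩhpd : ∀ l, (Ωh l).PosDef)
    (sqΩ : ∀ l : Fin L, Matrix (Fin (n l)) (Fin (n l)) ℂ)
    (hsqΩ : ∀ l, (sqΩ l).PosDef ∧ sqΩ l * sqΩ l = bmacOmega m n H Φ S l)
    (sqΩh : ∀ l : Fin L, Matrix (Fin (m l)) (Fin (m l)) ℂ)
    (hsqΩh : ∀ l, (sqΩh l).PosDef ∧ sqΩh l * sqΩh l = Ωh l)
    (hpwf : ∀ l : Fin L, ∃ (N : ℕ) (F : Matrix (Fin (n l)) (Fin N) ℂ)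
        (G : Matrix (Fin (m l)) (Fin N) ℂ) (δ : Fin N → ℝ),
      (∀ i, 0 < δ i) ∧ Fᴴ * F = 1 ∧ Gᴴ * G = 1 ∧
      (sqΩ l)⁻¹ * H l l * (sqΩh l)⁻¹
        = F * Matrix.diagonal (fun i => (δ i : ℂ)) * Gᴴ ∧
      sqΩh l * S l * sqΩh l
        = G * Matrix.diagonal
            (fun i => ((max (w l / μ - ((δ i) ^ 2)⁻¹) 0 : ℝ) : ℂ)) * Gᴴ) :
    ∀ l : Fin L, ∃ Θ : Matrix (Fin (m l)) (Fin (m l)) ℂ, Θ.PosSemidef ∧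
      Matrix.trace (S l * Θ) = 0 ∧
      μ • Ωh l = w l • ((H l l)ᴴ
          * (bmacOmega m n H Φ S l + H l l * S l * (H l l)ᴴ)⁻¹ * H l l) + Θ := by
  intro l
  obtain ⟨N, F, G, δ, hδ, hF, hG, hH, hSl⟩ := hpwf l
  obtain ⟨hA, hΩ⟩ := hsqΩ l
  obtain ⟨hB, hΩ'⟩ := hsqΩh l
  exact stmt18_general hμ hA.isUnit (hA.isHermitian.eq.symm ▸ hΩ) hB.isUnit
    (hB.isHermitian.eq.symm ▸ hΩ') ⟨hδ, hF, hG, hH, hB.isHermitian.eq.symm ▸ hSl⟩
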